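/- arXiv:1901.08318 — 3 statements merged into one kernel-verified Lean document; each statement's English description precedes it below -/
import Mathlib

section
/- Let n ≥ 1, s ≥ 1. For ξ ∈ ℝ^{2n} and ϑ ∈ ℝ^s∖{0} set q(ξ,ϑ) := i (2π)^{−(n+s/2)} ∫₀^∞ exp( i (tanh t) P(ξ)/|ϑ| ) / (|ϑ| cosh^n t) dt. Let R ∈ ℝ^{2n×2n} be any matrix such that τR is skew-symmetric. Then for all ξ ∈ ℝ^{2n} and all ϑ ∈ ℝ^s∖{0}: −P(ξ)·q(ξ,ϑ) − (|ϑ|²/4)·(L_ξ q)(ξ,ϑ) − i·Σ_{j=1}^{2n} (Rξ)_j·(∂q/∂ξ_j)(ξ,ϑ) = (2π)^{−(n+s/2)}, where L_ξ acts in the ξ-variables. -/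
/-!
The kernel is `q = i c · F₀(P(ξ))`, where `c = (2π)^{-(n+s/2)}`, `θ = |ϑ|` and
`F_k(p) = ∫₀^∞ tanh^k t · exp(i p tanh t / θ) / (θ cosh^n t) dt`. Since `cosh t ≥ exp(t) / 2`,
differentiation under the integral sign gives `F_k' = (i/θ) F_{k+1}` (`hasDerivAt_Fint`).

The first-order term vanishes: `∂_j (F₀ ∘ P) = 2 ε_j ξ_j · F₀'(P)` with `ε = diag τ`, so the sum
is a multiple of `⟨ξ, τRξ⟩ = 0` (`sum_skew`). For the second-order term,
`L (g ∘ P) = 4 P · g''(P) + 4 n · g'(P)` (`Lop_comp_Pq`), so the left-hand side becomes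
`-i c · (P (F₀ - F₂) + i n θ F₁)` evaluated at `P`. As `1 - tanh² = tanh'`, the integrand of the
bracket is the derivative of `-i exp(i P tanh t / θ) / cosh^n t`, so the bracket equals `i`
(`Fint_identity`) and the left-hand side equals `c`.
-/

open MeasureTheory Filter Matrix Set
open scoped Topology Real

noncomputable section

/-- Euclidean space ℝ^d. -/
abbrev Eu (d : ℕ) : Type := EuclideanSpace ℝ (Fin d)

def toEu {d : ℕ} (v : Fin d → ℝ) : Eu d := (WithLp.equiv 2 (Fin d → ℝ)).symm v

def fromEu {d : ℕ} (x : Eu d) : Fin d → ℝ := WithLp.equiv 2 (Fin d → ℝ) x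

/-- `P(x) = Σ_{j<n} x_j² − x_{n+j}²` on `ℝ^{2n}`. -/
def Pq (n : ℕ) (x : Eu (2*n)) : ℝ :=
  ∑ j : Fin n, ((x ⟨j.1, by have := j.isLt; omega⟩)^2 - (x ⟨n + j.1, by have := j.isLt; omega⟩)^2)

/-- Second directional derivative of `f` at `x` along `v`. -/
def dir2 {d : ℕ} (f : Eu d → ℂ) (v : Eu d) (x : Eu d) : ℂ :=
  fderiv ℝ (fun y => fderiv ℝ f y v) x v

/-- The classical ultra-hyperbolic operator `L = Σ_{j<n} ∂_j² − ∂_{n+j}²` on ℝ^{2n}. -/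
def Lop (n : ℕ) (f : Eu (2*n) → ℂ) (x : Eu (2*n)) : ℂ :=
  ∑ j : Fin n,
    (dir2 f (EuclideanSpace.single ⟨j.1, by have := j.isLt; omega⟩ 1) x
      - dir2 f (EuclideanSpace.single ⟨n + j.1, by have := j.isLt; omega⟩ 1) x)

/-- The Laplace operator on ℝ^d. -/
def LapOp (d : ℕ) (f : Eu d → ℂ) : Eu d → ℂ :=
  fun x => ∑ j : Fin d, dir2 f (EuclideanSpace.single j 1) x

/-- τ = diag(I_n, −I_n) ∈ ℝ^{2n×2n}. -/
def tauM (n : ℕ) : Matrix (Fin (2*n)) (Fin (2*n)) ℝ :=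
  Matrix.diagonal (fun i => if (i : ℕ) < n then 1 else -1)

/-- `⟨η,η⟩_{r,s}` for `η ∈ ℝ^{r+s}` (the first `r` coordinates enter positively). -/
def innerSig (r : ℕ) {c : ℕ} (η : Fin c → ℝ) : ℝ :=
  ∑ k : Fin c, (if (k : ℕ) < r then (1:ℝ) else -1) * (η k)^2

/-- `Ω(η) = Σ_k η_k Ω_k`. -/
def OmegaM {n c : ℕ} (Ω : Fin c → Matrix (Fin (2*n)) (Fin (2*n)) ℝ) (η : Fin c → ℝ) :
    Matrix (Fin (2*n)) (Fin (2*n)) ℝ :=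
  ∑ k, η k • Ω k

/-- A pseudo H-type structure of signature (r,s) on ℝ^{2n} (with c = r + s):
skew-symmetric matrices with `(τΩ(η))² = −(⟨η,η⟩_{r,s}/4)·I`. -/
def IsPseudoHType (n r : ℕ) {c : ℕ} (Ω : Fin c → Matrix (Fin (2*n)) (Fin (2*n)) ℝ) : Prop :=
  (∀ k, (Ω k)ᵀ = -(Ω k)) ∧
  ∀ η : Fin c → ℝ,
    (tauM n * OmegaM Ω η)^2 = (-(innerSig r η)/4) • (1 : Matrix (Fin (2*n)) (Fin (2*n)) ℝ)

/-- The left-invariant vector field `X_j = ∂/∂x_j + Σ_{m,k} (Ω_k)_{mj} x_m ∂/∂z_k` on ℝ^{2n}×ℝ^c. -/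
def Xop {n c : ℕ} (Ω : Fin c → Matrix (Fin (2*n)) (Fin (2*n)) ℝ) (j : Fin (2*n))
    (f : Eu (2*n) × Eu c → ℂ) (p : Eu (2*n) × Eu c) : ℂ :=
  fderiv ℝ f p (EuclideanSpace.single j 1, 0)
  + ∑ m : Fin (2*n), ∑ k : Fin c,
      ((Ω k m j * p.1 m : ℝ) : ℂ) * fderiv ℝ f p (0, EuclideanSpace.single k 1)

/-- The ultra-hyperbolic operator `Δ_{r,s} = Σ_{j<n} X_j² − X_{n+j}²`. -/
def DeltaOp {n c : ℕ} (Ω : Fin c → Matrix (Fin (2*n)) (Fin (2*n)) ℝ)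
    (f : Eu (2*n) × Eu c → ℂ) (p : Eu (2*n) × Eu c) : ℂ :=
  ∑ j : Fin n,
    (Xop Ω ⟨j.1, by have := j.isLt; omega⟩ (Xop Ω ⟨j.1, by have := j.isLt; omega⟩ f) p
     - Xop Ω ⟨n + j.1, by have := j.isLt; omega⟩ (Xop Ω ⟨n + j.1, by have := j.isLt; omega⟩ f) p)

/-- The Fourier transform on ℝ^a × ℝ^b with unitary normalization. -/
def FTprod (a b : ℕ) (f : Eu a × Eu b → ℂ) (q : Eu a × Eu b) : ℂ :=
  (((2*Real.pi) ^ (-((a + b : ℝ)/2)) : ℝ) : ℂ) *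
    ∫ p : Eu a × Eu b,
      Complex.exp (-Complex.I * ((∑ i, p.1 i * q.1 i + ∑ i, p.2 i * q.2 i : ℝ) : ℂ)) * f p

/-- The inverse Fourier transform on ℝ^d with unitary normalization. -/
def FinvD (d : ℕ) (f : Eu d → ℂ) (x : Eu d) : ℂ :=
  (((2*Real.pi) ^ (-((d : ℝ)/2)) : ℝ) : ℂ) *
    ∫ ξ : Eu d, Complex.exp (Complex.I * ((∑ j, x j * ξ j : ℝ) : ℂ)) * f ξ

/-- The kernel q(ξ,ϑ). -/
def qker (n s : ℕ) (ξ : Eu (2*n)) (ϑ : Eu s) : ℂ :=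
  Complex.I * (((2*Real.pi) ^ (-((n : ℝ) + s/2)) : ℝ) : ℂ) *
    ∫ t in Set.Ioi (0:ℝ),
      Complex.exp (Complex.I * ((Real.tanh t * Pq n ξ / ‖ϑ‖ : ℝ) : ℂ))
        / ((‖ϑ‖ * (Real.cosh t)^n : ℝ) : ℂ)

/-- `K_{0,s}(f) = ∫ q(ξ,ϑ)·(Ff)(ξ,ϑ)`. -/
def K0sFun (n s : ℕ) (f : Eu (2*n) × Eu s → ℂ) : ℂ :=
  ∫ p : Eu (2*n) × Eu s, qker n s p.1 p.2 * FTprod (2*n) s f p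

/-! ### The quadratic form `P` and the operator `L` on functions of `P` -/

/-- The sign `ε_i = τ_ii`, i.e. `1` on the first `n` coordinates and `-1` on the last `n`. -/
def sgn (n : ℕ) (i : Fin (2*n)) : ℝ := if (i : ℕ) < n then 1 else -1

lemma sgn_mul_self (n : ℕ) (i : Fin (2*n)) : sgn n i * sgn n i = 1 := by
  unfold sgn; split_ifs <;> norm_num

/-- The pairing of coordinates `j` and `n + j` used in `Pq` and `Lop`, as one signed sum over all
`2n` coordinates. -/
lemma sum_sgn {M : Type*} [AddCommGroup M] [Module ℝ M] (n : ℕ) (f : Fin (2*n) → M) :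
    ∑ j : Fin n, (f ⟨j.1, by have := j.isLt; omega⟩ - f ⟨n + j.1, by have := j.isLt; omega⟩)
      = ∑ i, sgn n i • f i := by
  have h : n + n = 2 * n := by omega
  rw [← (finCongr h).sum_comp, Fin.sum_univ_add, ← Finset.sum_add_distrib]
  refine Finset.sum_congr rfl fun j _ => ?_
  have h1 : finCongr h (Fin.castAdd n j) = ⟨j.1, by have := j.isLt; omega⟩ := rfl
  have h2 : finCongr h (Fin.natAdd n j) = ⟨n + j.1, by have := j.isLt; omega⟩ := rfl
  rw [h1, h2]
  simp [sgn, sub_eq_add_neg]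

lemma Pq_eq (n : ℕ) (x : Eu (2*n)) : Pq n x = ∑ i, sgn n i * (x i)^2 := by
  unfold Pq
  rw [sum_sgn n (fun i => (x i)^2)]
  simp

/-- The derivative of `P` at `x`, as a continuous linear form. -/
def dP (n : ℕ) (x : Eu (2*n)) : Eu (2*n) →L[ℝ] ℝ :=
  ∑ i, (2 * sgn n i * x i) • (EuclideanSpace.proj i : Eu (2*n) →L[ℝ] ℝ)

lemma hasFDerivAt_Pq (n : ℕ) (x : Eu (2*n)) : HasFDerivAt (Pq n) (dP n x) x := by
  have h : Pq n = fun x => ∑ i, sgn n i * (x i)^2 := funext (Pq_eq n)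
  rw [h]
  unfold dP
  refine HasFDerivAt.fun_sum fun i _ => ?_
  have h1 : HasFDerivAt (fun y : Eu (2*n) => y i)
      (EuclideanSpace.proj i : Eu (2*n) →L[ℝ] ℝ) x :=
    (EuclideanSpace.proj i : Eu (2*n) →L[ℝ] ℝ).hasFDerivAt
  refine ((h1.pow 2).const_mul (sgn n i)).congr_fderiv ?_
  ext v
  simp
  ring

lemma dP_single (n : ℕ) (x : Eu (2*n)) (j : Fin (2*n)) :
    dP n x (EuclideanSpace.single j 1) = 2 * sgn n j * x j := by
  simp [dP]

lemma fderiv_comp_Pq (n : ℕ) {g g' : ℝ → ℂ} (hg : ∀ p, HasDerivAt g (g' p) p)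
    (x v : Eu (2*n)) :
    fderiv ℝ (fun y => g (Pq n y)) x v = (dP n x v : ℂ) * g' (Pq n x) := by
  have h := (hg (Pq n x)).hasFDerivAt.comp x (hasFDerivAt_Pq n x)
  have h' : fderiv ℝ (fun y => g (Pq n y)) x = _ := h.fderiv
  rw [h']
  simp

lemma dir2_comp_Pq (n : ℕ) {g g' g'' : ℝ → ℂ} (hg : ∀ p, HasDerivAt g (g' p) p)
    (hg' : ∀ p, HasDerivAt g' (g'' p) p) (x : Eu (2*n)) (j : Fin (2*n)) :
    dir2 (fun y => g (Pq n y)) (EuclideanSpace.single j 1) x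
      = 4 * ((x j : ℝ) : ℂ)^2 * g'' (Pq n x) + 2 * ((sgn n j : ℝ) : ℂ) * g' (Pq n x) := by
  unfold dir2
  simp only [fderiv_comp_Pq n hg, dP_single]
  have h1 : HasFDerivAt (fun y : Eu (2*n) => y j)
      (EuclideanSpace.proj j : Eu (2*n) →L[ℝ] ℝ) x :=
    (EuclideanSpace.proj j : Eu (2*n) →L[ℝ] ℝ).hasFDerivAt
  have h2 := (Complex.ofRealCLM.hasFDerivAt (x := 2 * sgn n j * x j)).comp x
    (h1.const_mul (2 * sgn n j))
  have h3 := (hg' (Pq n x)).hasFDerivAt.comp x (hasFDerivAt_Pq n x)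
  have h4 : fderiv ℝ (fun y : Eu (2*n) => ((2 * sgn n j * y j : ℝ) : ℂ) * g' (Pq n y)) x = _ :=
    (h2.mul h3).fderiv
  rw [h4]
  have hs : ((sgn n j : ℝ) : ℂ) * ((sgn n j : ℝ) : ℂ) = 1 := by
    exact_mod_cast sgn_mul_self n j
  simp [dP_single]
  linear_combination (4 * ((x j : ℝ) : ℂ)^2 * g'' (Pq n x)) * hs

/-- The chain rule `L(g ∘ P) = 4 P · g''(P) + 4 n · g'(P)`. -/
lemma Lop_comp_Pq (n : ℕ) {g g' g'' : ℝ → ℂ} (hg : ∀ p, HasDerivAt g (g' p) p)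
    (hg' : ∀ p, HasDerivAt g' (g'' p) p) (x : Eu (2*n)) :
    Lop n (fun y => g (Pq n y)) x
      = 4 * (Pq n x : ℂ) * g'' (Pq n x) + 4 * n * g' (Pq n x) := by
  unfold Lop
  rw [sum_sgn n (fun i => dir2 (fun y => g (Pq n y)) (EuclideanSpace.single i 1) x)]
  have key : ∀ i, sgn n i • dir2 (fun y => g (Pq n y)) (EuclideanSpace.single i 1) x
      = 4 * ((sgn n i * (x i)^2 : ℝ) : ℂ) * g'' (Pq n x) + 2 * g' (Pq n x) := by
    intro i
    have hs : ((sgn n i : ℝ) : ℂ) * ((sgn n i : ℝ) : ℂ) = 1 := by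
      exact_mod_cast sgn_mul_self n i
    rw [dir2_comp_Pq n hg hg', Complex.real_smul]
    push_cast
    linear_combination (2 * g' (Pq n x)) * hs
  simp only [key]
  rw [Finset.sum_add_distrib, ← Finset.sum_mul, ← Finset.mul_sum, ← Complex.ofReal_sum, ← Pq_eq]
  simp
  ring

/-! ### Skew-symmetry of `τR` -/

/-- Since `τR` is skew-symmetric, `⟨ξ, τRξ⟩ = 0`. -/
lemma sum_skew (n : ℕ) (R : Matrix (Fin (2*n)) (Fin (2*n)) ℝ)
    (hR : (tauM n * R)ᵀ = -(tauM n * R)) (v : Fin (2*n) → ℝ) :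
    ∑ j, R.mulVec v j * (sgn n j * v j) = 0 := by
  have h1 : ∑ j, R.mulVec v j * (sgn n j * v j) = v ⬝ᵥ ((tauM n * R) *ᵥ v) := by
    rw [← Matrix.mulVec_mulVec]
    simp only [dotProduct, tauM, Matrix.mulVec_diagonal, sgn]
    refine Finset.sum_congr rfl fun j _ => ?_
    ring
  have h2 : v ⬝ᵥ ((tauM n * R) *ᵥ v) = v ⬝ᵥ ((tauM n * R)ᵀ *ᵥ v) := by
    rw [Matrix.mulVec_transpose, dotProduct_comm v (v ᵥ* _), Matrix.dotProduct_mulVec]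
  rw [hR, Matrix.neg_mulVec, dotProduct_neg] at h2
  linarith

/-! ### The integrals `F_k` -/

/-- `F_k(p) = ∫₀^∞ tanh^k t · exp(i p tanh t / θ) / (θ cosh^n t) dt`; up to a constant,
`q(ξ, ϑ)` is `F_0(P(ξ))` with `θ = |ϑ|`. -/
def Fint (n : ℕ) (θ : ℝ) (k : ℕ) (p : ℝ) : ℂ :=
  ∫ t in Set.Ioi (0:ℝ), ((Real.tanh t ^ k : ℝ) : ℂ) *
      (Complex.exp (Complex.I * ((Real.tanh t * p / θ : ℝ) : ℂ))
        / ((θ * (Real.cosh t)^n : ℝ) : ℂ))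

lemma hasDerivAt_tanh' (t : ℝ) : HasDerivAt Real.tanh (1 - Real.tanh t ^ 2) t := by
  have h := (Real.hasDerivAt_sinh t).div (Real.hasDerivAt_cosh t) (Real.cosh_pos t).ne'
  have e : Real.tanh = Real.sinh / Real.cosh := by
    ext x; simp [Real.tanh_eq_sinh_div_cosh]
  rw [← e] at h
  refine h.congr_deriv ?_
  have := (Real.cosh_pos t).ne'
  rw [Real.tanh_eq_sinh_div_cosh]
  field_simp

lemma continuous_tanh' : Continuous Real.tanh :=
  continuous_iff_continuousAt.2 fun t => (hasDerivAt_tanh' t).continuousAt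

lemma abs_tanh_le_one' (t : ℝ) : |Real.tanh t| ≤ 1 := by
  rw [Real.tanh_eq_sinh_div_cosh, abs_div, abs_of_pos (Real.cosh_pos t),
    div_le_one (Real.cosh_pos t)]
  refine abs_le_of_sq_le_sq ?_ (Real.cosh_pos t).le
  nlinarith [Real.cosh_sq t]

lemma inv_cosh_pow_le {n : ℕ} (hn : 1 ≤ n) (t : ℝ) :
    ((Real.cosh t)^n)⁻¹ ≤ 2 * Real.exp (-t) := by
  have h1 : Real.cosh t ≤ Real.cosh t ^ n := le_self_pow₀ (Real.one_le_cosh t) (by omega)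
  have h2 : Real.exp t / 2 ≤ Real.cosh t := by
    rw [Real.cosh_eq]; have := Real.exp_pos (-t); linarith
  calc ((Real.cosh t)^n)⁻¹ ≤ (Real.exp t / 2)⁻¹ :=
        inv_anti₀ (by positivity) (h2.trans h1)
    _ = 2 * Real.exp (-t) := by rw [Real.exp_neg]; field_simp

lemma norm_integrand {n : ℕ} {θ : ℝ} (hθ : 0 < θ) (k : ℕ) (p t : ℝ) :
    ‖((Real.tanh t ^ k : ℝ) : ℂ) *
      (Complex.exp (Complex.I * ((Real.tanh t * p / θ : ℝ) : ℂ))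
        / ((θ * (Real.cosh t)^n : ℝ) : ℂ))‖ ≤ θ⁻¹ * ((Real.cosh t)^n)⁻¹ := by
  have hc : 0 < Real.cosh t ^ n := pow_pos (Real.cosh_pos t) n
  rw [norm_mul, norm_div, Complex.norm_exp_I_mul_ofReal, Complex.norm_real, Complex.norm_real,
    Real.norm_eq_abs, Real.norm_eq_abs, abs_of_pos (mul_pos hθ hc), abs_pow, one_div, mul_inv]
  have := pow_le_one₀ (n := k) (abs_nonneg _) (abs_tanh_le_one' t)
  have h0 : 0 ≤ θ⁻¹ * ((Real.cosh t)^n)⁻¹ := by positivity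
  nlinarith

lemma integrableOn_bound {n : ℕ} (hn : 1 ≤ n) :
    IntegrableOn (fun t => ((Real.cosh t)^n)⁻¹) (Set.Ioi (0:ℝ)) := by
  have h : IntegrableOn (fun t => 2 * Real.exp (-t)) (Set.Ioi (0:ℝ)) :=
    (integrableOn_exp_neg_Ioi 0).const_mul 2
  refine h.mono' ?_ (ae_of_all _ fun t => ?_)
  · exact (Continuous.inv₀ (Real.continuous_cosh.pow n)
      fun t => (pow_pos (Real.cosh_pos t) n).ne').aestronglyMeasurable
  · have hc : 0 < Real.cosh t ^ n := pow_pos (Real.cosh_pos t) n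
    rw [Real.norm_eq_abs, abs_of_pos (by positivity)]
    exact inv_cosh_pow_le hn t

lemma continuous_integrand (n : ℕ) {θ : ℝ} (hθ : 0 < θ) (k : ℕ) (p : ℝ) :
    Continuous fun t : ℝ => ((Real.tanh t ^ k : ℝ) : ℂ) *
      (Complex.exp (Complex.I * ((Real.tanh t * p / θ : ℝ) : ℂ))
        / ((θ * (Real.cosh t)^n : ℝ) : ℂ)) := by
  have h1 := continuous_tanh'
  have h2 := Real.continuous_cosh
  refine (Complex.continuous_ofReal.comp (h1.pow k)).mul
    (Continuous.div ?_ (Complex.continuous_ofReal.comp (continuous_const.mul (h2.pow n))) ?_)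
  · exact Complex.continuous_exp.comp (continuous_const.mul
      (Complex.continuous_ofReal.comp ((h1.mul continuous_const).div_const θ)))
  · intro t
    exact_mod_cast (mul_pos hθ (pow_pos (Real.cosh_pos t) n)).ne'

lemma integrableOn_integrand {n : ℕ} (hn : 1 ≤ n) {θ : ℝ} (hθ : 0 < θ) (k : ℕ) (p : ℝ) :
    IntegrableOn (fun t : ℝ => ((Real.tanh t ^ k : ℝ) : ℂ) *
      (Complex.exp (Complex.I * ((Real.tanh t * p / θ : ℝ) : ℂ))
        / ((θ * (Real.cosh t)^n : ℝ) : ℂ))) (Set.Ioi 0) :=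
  Integrable.mono' ((integrableOn_bound hn).const_mul θ⁻¹)
    (continuous_integrand n hθ k p).aestronglyMeasurable
    (ae_of_all _ fun t => norm_integrand hθ k p t)

/-- Differentiation under the integral sign: `F_k' = (i/θ) F_{k+1}`. -/
lemma hasDerivAt_Fint {n : ℕ} (hn : 1 ≤ n) {θ : ℝ} (hθ : 0 < θ) (k : ℕ) (p : ℝ) :
    HasDerivAt (Fint n θ k) (Complex.I / θ * Fint n θ (k+1) p) p := by
  have h := (hasDerivAt_integral_of_dominated_loc_of_deriv_le
    (μ := volume.restrict (Set.Ioi (0:ℝ))) (s := Set.univ) (x₀ := p)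
    (F := fun p t => ((Real.tanh t ^ k : ℝ) : ℂ) *
      (Complex.exp (Complex.I * ((Real.tanh t * p / θ : ℝ) : ℂ))
        / ((θ * (Real.cosh t)^n : ℝ) : ℂ)))
    (F' := fun p t => Complex.I / θ * (((Real.tanh t ^ (k+1) : ℝ) : ℂ) *
      (Complex.exp (Complex.I * ((Real.tanh t * p / θ : ℝ) : ℂ))
        / ((θ * (Real.cosh t)^n : ℝ) : ℂ))))
    (bound := fun t => θ⁻¹ * (θ⁻¹ * ((Real.cosh t)^n)⁻¹))
    Filter.univ_mem
    (Eventually.of_forall fun q => (continuous_integrand n hθ k q).aestronglyMeasurable)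
    (integrableOn_integrand hn hθ k p)
    ((continuous_integrand n hθ (k+1) p).const_smul (Complex.I / (θ:ℂ))).aestronglyMeasurable
    (ae_of_all _ fun t q _ => ?_)
    (((integrableOn_bound hn).const_mul θ⁻¹).const_mul θ⁻¹)
    (ae_of_all _ fun t q _ => ?_)).2
  · rw [integral_const_mul] at h
    exact h
  · rw [norm_mul, norm_div, Complex.norm_I, Complex.norm_real, Real.norm_eq_abs, abs_of_pos hθ,
      one_div]
    exact mul_le_mul_of_nonneg_left (norm_integrand hθ (k+1) q t) (by positivity)
  · have h1 : HasDerivAt (fun q : ℝ => Real.tanh t * q / θ) (Real.tanh t / θ) q := by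
      simpa using ((hasDerivAt_id q).const_mul (Real.tanh t)).div_const θ
    have h2 := (((h1.ofReal_comp).const_mul Complex.I).cexp.div_const
      ((θ * (Real.cosh t)^n : ℝ) : ℂ)).const_mul ((Real.tanh t ^ k : ℝ) : ℂ)
    refine h2.congr_deriv ?_
    push_cast
    ring

/-- The fundamental theorem of calculus for `t ↦ exp(i p tanh t / θ) / cosh^n t`, which equals `1`
at `0` and decays at infinity. -/
lemma Fint_identity {n : ℕ} (hn : 1 ≤ n) {θ : ℝ} (hθ : 0 < θ) (p : ℝ) :
    (p : ℂ) * (Fint n θ 0 p - Fint n θ 2 p) + Complex.I * n * θ * Fint n θ 1 p = Complex.I := by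
  have hθ' : (θ : ℂ) ≠ 0 := by exact_mod_cast hθ.ne'
  have i0 := integrableOn_integrand hn hθ 0 p
  have i1 := integrableOn_integrand hn hθ 1 p
  have i2 := integrableOn_integrand hn hθ 2 p
  have hint := ((i0.sub i2).const_mul (p:ℂ)).add (i1.const_mul (Complex.I * n * θ))
  unfold Fint
  rw [← integral_sub i0 i2, ← integral_const_mul, ← integral_const_mul]
  refine (integral_add ((i0.sub i2).const_mul (p:ℂ))
    (i1.const_mul (Complex.I * n * θ))).symm.trans ?_
  have hlim : Tendsto (fun t : ℝ => -Complex.I * θ * (((Real.tanh t ^ 0 : ℝ) : ℂ) *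
      (Complex.exp (Complex.I * ((Real.tanh t * p / θ : ℝ) : ℂ))
        / ((θ * (Real.cosh t)^n : ℝ) : ℂ)))) atTop (𝓝 (-Complex.I * θ * 0)) := by
    refine Tendsto.const_mul _ ?_
    refine squeeze_zero_norm (a := fun t => θ⁻¹ * (2 * Real.exp (-t))) (fun t =>
      (norm_integrand hθ 0 p t).trans
        (mul_le_mul_of_nonneg_left (inv_cosh_pow_le hn t) (by positivity))) ?_
    have := (Real.tendsto_exp_neg_atTop_nhds_zero.const_mul 2).const_mul θ⁻¹
    simpa using this
  refine (integral_Ioi_of_hasDerivAt_of_tendsto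
    (continuous_const.mul (continuous_integrand n hθ 0 p)).continuousWithinAt
    (fun t _ => ?_) hint hlim).trans ?_
  rotate_left
  · simp
    field_simp
  · have hc : Real.cosh t ≠ 0 := (Real.cosh_pos t).ne'
    have hc' : ((Real.cosh t : ℝ) : ℂ) ≠ 0 := by exact_mod_cast hc
    have h1 : HasDerivAt (fun t : ℝ => Real.tanh t * p / θ)
        ((1 - Real.tanh t ^ 2) * p / θ) t :=
      ((hasDerivAt_tanh' t).mul_const p).div_const θ
    have h2 := ((h1.ofReal_comp).const_mul Complex.I).cexp
    have h3 : HasDerivAt (fun t : ℝ => θ * Real.cosh t ^ n)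
        (θ * (n * Real.cosh t ^ n * Real.tanh t)) t := by
      refine (((Real.hasDerivAt_cosh t).pow n).const_mul θ).congr_deriv ?_
      obtain ⟨m, rfl⟩ : ∃ m, n = m + 1 := ⟨n - 1, by omega⟩
      rw [Real.tanh_eq_sinh_div_cosh]
      simp only [Nat.add_sub_cancel]
      field_simp
      ring
    have hne : ((θ * Real.cosh t ^ n : ℝ) : ℂ) ≠ 0 := by
      exact_mod_cast (mul_pos hθ (pow_pos (Real.cosh_pos t) n)).ne'
    have h4 := (h2.div h3.ofReal_comp hne).const_mul (-Complex.I * θ)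
    refine (h4.congr_deriv ?_).congr_of_eventuallyEq
      (Eventually.of_forall fun u => by simp)
    simp only [Pi.add_apply, Pi.sub_apply]
    push_cast
    generalize Complex.exp _ = E
    generalize Complex.tanh (t:ℂ) = T at *
    have hc'' : Complex.cosh (t:ℂ) ≠ 0 := by simpa using hc'
    field_simp
    linear_combination (-(p:ℂ) * (1 - T^2) * E) * Complex.I_sq

lemma qker_eq (n s : ℕ) (ξ : Eu (2*n)) (ϑ : Eu s) :
    qker n s ξ ϑ = Complex.I * (((2*Real.pi) ^ (-((n : ℝ) + s/2)) : ℝ) : ℂ)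
      * Fint n ‖ϑ‖ 0 (Pq n ξ) := by
  simp [qker, Fint]

/-! ### The equation for `q` -/

theorem stmt2 (n s : ℕ) (hn : 1 ≤ n) (hs : 1 ≤ s)
    (R : Matrix (Fin (2*n)) (Fin (2*n)) ℝ) (hR : (tauM n * R)ᵀ = -(tauM n * R))
    (ξ : Eu (2*n)) (ϑ : Eu s) (hϑ : ϑ ≠ 0) :
    -((Pq n ξ : ℝ) : ℂ) * qker n s ξ ϑ
      - (((‖ϑ‖^2/4 : ℝ)) : ℂ) * Lop n (fun ξ' => qker n s ξ' ϑ) ξ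
      - Complex.I * ∑ j : Fin (2*n),
          ((R.mulVec (fromEu ξ) j : ℝ) : ℂ)
            * fderiv ℝ (fun ξ' => qker n s ξ' ϑ) ξ (EuclideanSpace.single j 1)
      = (((2*Real.pi) ^ (-((n : ℝ) + s/2)) : ℝ) : ℂ) := by
  have hθ : 0 < ‖ϑ‖ := norm_pos_iff.2 hϑ
  have hθ' : ((‖ϑ‖ : ℝ) : ℂ) ≠ 0 := by exact_mod_cast hθ.ne'
  set θ : ℝ := ‖ϑ‖ with hθdef
  set c : ℂ := (((2*Real.pi) ^ (-((n : ℝ) + s/2)) : ℝ) : ℂ) with hc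
  have hq : (fun ξ' => qker n s ξ' ϑ)
      = fun ξ' => (fun p => Complex.I * c * Fint n θ 0 p) (Pq n ξ') :=
    funext fun ξ' => qker_eq n s ξ' ϑ
  have hg : ∀ p, HasDerivAt (fun p => Complex.I * c * Fint n θ 0 p)
      (Complex.I * c * (Complex.I / θ * Fint n θ 1 p)) p := fun p =>
    (hasDerivAt_Fint hn hθ 0 p).const_mul _
  have hg' : ∀ p, HasDerivAt (fun p => Complex.I * c * (Complex.I / θ * Fint n θ 1 p))
      (Complex.I * c * (Complex.I / θ * (Complex.I / θ * Fint n θ 2 p))) p := fun p =>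
    ((hasDerivAt_Fint hn hθ 1 p).const_mul _).const_mul _
  have hsum : ∑ j : Fin (2*n), ((R.mulVec (fromEu ξ) j : ℝ) : ℂ)
      * fderiv ℝ (fun ξ' => qker n s ξ' ϑ) ξ (EuclideanSpace.single j 1) = 0 := by
    rw [hq]
    simp only [fderiv_comp_Pq n hg, dP_single]
    have h0 : ((∑ j, R.mulVec (fromEu ξ) j * (sgn n j * fromEu ξ j) : ℝ) : ℂ) = 0 := by
      rw [sum_skew n R hR]; simp
    have hx : ∀ j, ξ j = fromEu ξ j := fun _ => rfl
    calc _ = ∑ j, (((R.mulVec (fromEu ξ) j * (sgn n j * fromEu ξ j) : ℝ) : ℂ)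
            * (2 * (Complex.I * c * (Complex.I / θ * Fint n θ 1 (Pq n ξ))))) := by
          refine Finset.sum_congr rfl fun j _ => ?_
          rw [hx j]
          push_cast
          ring
      _ = 0 := by rw [← Finset.sum_mul, ← Complex.ofReal_sum, h0, zero_mul]
  rw [hsum, hq, Lop_comp_Pq n hg hg', qker_eq, ← hc, ← hθdef]
  have key := Fint_identity hn hθ (Pq n ξ)
  push_cast
  field_simp
  generalize Fint n θ 0 (Pq n ξ) = A at *
  generalize Fint n θ 1 (Pq n ξ) = B at *
  generalize Fint n θ 2 (Pq n ξ) = D at *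
  linear_combination (-Complex.I * c) * key
    + (-(c * Complex.I * (Pq n ξ : ℂ) * D) - c) * Complex.I_sq
end
end

section
/- Let n ≥ 2. For every Schwartz function ψ ∈ 𝓢(ℝ^{2n}) the limit lim_{ε→0⁺} ∫_{ℝ^{2n}} ψ(x)·(P(x) − iε)^{−(n−1)} dx exists in ℂ. Moreover, there is a constant C > 0, independent of ψ and of ε > 0, such that | ∫_{ℝ^{2n}} ψ(x)·(P(x) − iε)^{−(n−1)} dx | ≤ C·( ‖ψ‖_{L¹(ℝ^{2n})} + ‖F⁻¹ψ‖_{L¹(ℝ^{2n})} ) for all ε > 0. -/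
/-!
The power is written as a Laplace transform: since `i(P - iε) = ε + iP` has positive real part,
`(P - iε)^{-(n-1)} = i^{n-1} / (n-2)! * ∫_0^∞ t^{n-2} e^{-εt} e^{-itP} dt`
(`integral_pow_mul_cexp`). With `G(t) = ∫ ψ(x) e^{-itP(x)} dx` (`oscInt`), Fubini turns the integral
against `ψ` into a multiple of `∫_0^∞ t^{n-2} e^{-εt} G(t) dt` (`integral_mul_inv_pow_eq`).

Trivially `|G(t)| ≤ ‖ψ‖₁`. The Fourier transform of `e^{-itP}`, regularised by a small Gaussian
damping, is bounded by `(π/t)^n` in the normalization `e^{-2πi⟨x,ξ⟩}`; hence by Fourier inversion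
`|G(t)| ≤ (π/t)^n ‖𝓕⁻ψ‖₁` (`norm_integral_mul_oscillatory_le`, `pow_mul_norm_oscInt_le`).
The first bound near `0` and the second near `∞` give
`t^{n-2} |G(t)| ≤ 2 (‖ψ‖₁ + π^n ‖𝓕⁻ψ‖₁) / (1 + t²)` (`norm_integrand_le`),
an integrable majorant independent of `ε`. It yields the uniform estimate at once, and the limit
`ε → 0⁺` by dominated convergence.
-/

open MeasureTheory Filter Matrix Set
open scoped Topology Real

noncomputable section

open scoped FourierTransform

/-! ### The Laplace transform of `t ^ k` at a complex parameter -/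

lemma integrableOn_pow_mul_rexp (k : ℕ) {a : ℝ} (ha : 0 < a) :
    IntegrableOn (fun t : ℝ => t ^ k * Real.exp (-(a * t))) (Ioi 0) := by
  have h := integrableOn_rpow_mul_exp_neg_mul_rpow (p := 1) (s := k) (b := a)
    (by have : (0 : ℝ) ≤ k := k.cast_nonneg
        linarith) one_pos ha
  simpa [neg_mul] using h

lemma integrableOn_pow_mul_cexp (k : ℕ) {z : ℂ} (hz : 0 < z.re) :
    IntegrableOn (fun t : ℝ => (t : ℂ) ^ k * Complex.exp (-(z * t))) (Ioi 0) := by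
  refine Integrable.mono' (integrableOn_pow_mul_rexp k hz)
    (by fun_prop) ?_
  filter_upwards [ae_restrict_mem measurableSet_Ioi] with t ht
  simp [Complex.norm_exp, abs_of_pos (mem_Ioi.1 ht)]

/-- By induction on `k`, integrating the derivative of `t ^ (k + 1) * e^{-zt}` over `(0, ∞)`. -/
lemma integral_pow_mul_cexp (k : ℕ) {z : ℂ} (hz : 0 < z.re) :
    ∫ t in Ioi (0 : ℝ), (t : ℂ) ^ k * Complex.exp (-(z * t)) = k.factorial / z ^ (k + 1) := by
  have hz0 : z ≠ 0 := by rintro rfl; simp at hz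
  induction k with
  | zero =>
    have := integral_exp_mul_complex_Ioi (a := -z) (by simpa using hz) 0
    simpa [neg_mul] using this
  | succ k ih =>
    have hd : ∀ t ∈ Ici (0 : ℝ), HasDerivAt
        (fun t : ℝ => (t : ℂ) ^ (k + 1) * Complex.exp (-(z * t)))
        (((k : ℂ) + 1) * ((t : ℂ) ^ k * Complex.exp (-(z * t)))
          - z * ((t : ℂ) ^ (k + 1) * Complex.exp (-(z * t)))) t := by
      intro t _
      have h1 : HasDerivAt (fun w : ℂ => w ^ (k + 1) * Complex.exp (-(z * w)))
          (((k : ℂ) + 1) * ((t : ℂ) ^ k * Complex.exp (-(z * t)))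
          - z * ((t : ℂ) ^ (k + 1) * Complex.exp (-(z * t)))) (t : ℂ) := by
        have h2 := (hasDerivAt_pow (k + 1) (t : ℂ)).mul
          (((hasDerivAt_id (t : ℂ)).const_mul z).neg.cexp)
        refine h2.congr_deriv ?_
        simp
        ring
      exact h1.comp_ofReal
    have i1 := (integrableOn_pow_mul_cexp k hz).const_mul ((k : ℂ) + 1)
    have i2 := (integrableOn_pow_mul_cexp (k + 1) hz).const_mul z
    have hlim : Tendsto (fun t : ℝ => (t : ℂ) ^ (k + 1) * Complex.exp (-(z * t))) atTop (𝓝 0) := by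
      rw [tendsto_zero_iff_norm_tendsto_zero]
      have h3 := tendsto_rpow_mul_exp_neg_mul_atTop_nhds_zero ((k : ℝ) + 1) z.re hz
      refine h3.congr' ?_
      filter_upwards [eventually_gt_atTop 0] with t ht
      simp only [norm_mul, norm_pow, Complex.norm_real, Real.norm_eq_abs, abs_of_pos ht,
        Complex.norm_exp]
      norm_cast
      simp
    have key := integral_Ioi_of_hasDerivAt_of_tendsto' hd (i1.sub i2) hlim
    rw [integral_sub i1 i2, integral_const_mul, integral_const_mul, ih] at key
    simp only [Complex.ofReal_zero, ne_eq, Nat.succ_ne_zero, not_false_eq_true, zero_pow, zero_mul,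
      sub_zero] at key
    rw [sub_eq_zero] at key
    rw [eq_div_iff (pow_ne_zero _ hz0), pow_succ z (k + 1), Nat.factorial_succ]
    field_simp at key
    push_cast
    linear_combination -key

/-! ### Dispersive estimate for complex Gaussians -/

/-- The Fourier transform of `e^{-∑ bᵢ vᵢ²}` is an explicit product of one-dimensional Gaussians,
in which the `i`-th factor is at most `|π / bᵢ|^{1/2}` because `Re (1 / bᵢ) ≥ 0`. -/
lemma norm_fourier_gaussian_le {ι : Type*} [Fintype ι] {b : ι → ℂ} {t : ℝ} (ht : 0 < t)
    (hb : ∀ i, 0 < (b i).re) (hbt : ∀ i, t ≤ ‖b i‖) (w : EuclideanSpace ℝ ι) :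
    ‖𝓕 (fun v : EuclideanSpace ℝ ι => Complex.exp (-∑ i, b i * (v i : ℂ) ^ 2)) w‖
      ≤ √(π / t) ^ Fintype.card ι := by
  rw [Real.fourier_eq', ← (PiLp.volume_preserving_toLp ι).integral_comp
    (MeasurableEquiv.toLp 2 _).measurableEmbedding]
  have h := GaussianFourier.integral_cexp_neg_sum_mul_add hb
    (fun i => -2 * π * Complex.I * (w i : ℂ))
  have e : ∀ v : ι → ℝ, Complex.exp (((-2 * π * inner ℝ (WithLp.toLp 2 v) w : ℝ) : ℂ) * Complex.I)
      • Complex.exp (-∑ i, b i * (((WithLp.toLp 2 v : EuclideanSpace ℝ ι) i : ℝ) : ℂ) ^ 2)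
      = Complex.exp (-∑ i, b i * (v i : ℂ) ^ 2 + ∑ i, -2 * π * Complex.I * (w i : ℂ) * v i) := by
    intro v
    rw [smul_eq_mul, ← Complex.exp_add, add_comm]
    congr 2
    simp only [PiLp.inner_apply, RCLike.inner_apply, conj_trivial, Complex.ofReal_mul,
      Complex.ofReal_sum, Finset.mul_sum, Finset.sum_mul]
    refine Finset.sum_congr rfl fun i _ => ?_
    push_cast
    ring
  simp only [e]
  rw [h, norm_prod, ← Finset.card_univ, ← Finset.prod_const]
  refine Finset.prod_le_prod (fun i _ => norm_nonneg _) fun i _ => ?_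
  have hb0 : b i ≠ 0 := by intro h0; have := hb i; simp [h0] at this
  have h1 : ‖((π : ℂ) / b i) ^ (1 / 2 : ℂ)‖ ≤ √(π / t) := by
    rw [show (1 / 2 : ℂ) = ((1 / 2 : ℝ) : ℂ) by norm_num, Complex.norm_cpow_real,
      ← Real.sqrt_eq_rpow]
    apply Real.sqrt_le_sqrt
    rw [norm_div, Complex.norm_real, Real.norm_eq_abs, abs_of_pos Real.pi_pos]
    exact div_le_div_of_nonneg_left Real.pi_pos.le ht (hbt i)
  have h2 : ‖Complex.exp ((-2 * π * Complex.I * (w i : ℂ)) ^ 2 / (4 * b i))‖ ≤ 1 := by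
    rw [Complex.norm_exp, Real.exp_le_one_iff]
    have : (-2 * π * Complex.I * (w i : ℂ)) ^ 2 / (4 * b i)
        = ((-(π * w i) ^ 2 : ℝ) : ℂ) * (b i)⁻¹ := by
      field_simp
      push_cast
      ring_nf
      simp
    rw [this, Complex.re_ofReal_mul, Complex.inv_re]
    have := div_nonneg (hb i).le (Complex.normSq_nonneg (b i))
    nlinarith [sq_nonneg (π * w i)]
  rw [norm_mul]
  exact (mul_le_mul h1 h2 (norm_nonneg _) (Real.sqrt_nonneg _)).trans_eq (mul_one _)

lemma integrable_gaussian {ι : Type*} [Fintype ι] {b : ι → ℂ} (hb : ∀ i, 0 < (b i).re) :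
    Integrable (fun v : EuclideanSpace ℝ ι => Complex.exp (-∑ i, b i * (v i : ℂ) ^ 2)) := by
  rw [← (PiLp.volume_preserving_toLp ι).integrable_comp_emb
    (MeasurableEquiv.toLp 2 _).measurableEmbedding]
  simpa [Function.comp_def] using GaussianFourier.integrable_cexp_neg_sum_mul_add hb 0

/-- Writing `ψ = 𝓕 (𝓕⁻ ψ)` and moving `𝓕` onto the Gaussian turns the sup bound on its transform
into a bound by the `L¹` norm of `𝓕⁻ ψ`. -/
lemma norm_integral_mul_gaussian_le {ι : Type*} [Fintype ι]
    (ψ : SchwartzMap (EuclideanSpace ℝ ι) ℂ) {b : ι → ℂ} {t : ℝ} (ht : 0 < t)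
    (hb : ∀ i, 0 < (b i).re) (hbt : ∀ i, t ≤ ‖b i‖) :
    ‖∫ x : EuclideanSpace ℝ ι, ψ x * Complex.exp (-∑ i, b i * (x i : ℂ) ^ 2)‖
      ≤ √(π / t) ^ Fintype.card ι * ∫ ξ : EuclideanSpace ℝ ι, ‖𝓕⁻ (⇑ψ) ξ‖ := by
  set g : EuclideanSpace ℝ ι → ℂ := fun x => Complex.exp (-∑ i, b i * (x i : ℂ) ^ 2) with hg
  obtain ⟨φ, hφ⟩ : ∃ φ : SchwartzMap (EuclideanSpace ℝ ι) ℂ, φ = 𝓕⁻ ψ := ⟨_, rfl⟩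
  have hφψ : 𝓕 (⇑φ) = ⇑ψ := by
    rw [← SchwartzMap.fourier_coe, hφ, FourierTransform.fourier_fourierInv_eq]
  have hψφ : 𝓕⁻ (⇑ψ) = ⇑φ := by rw [← SchwartzMap.fourierInv_coe, hφ]
  have hflip : ∫ x, 𝓕 (⇑φ) x • g x = ∫ x, φ x • 𝓕 g x := by
    simpa using! VectorFourier.integral_fourierIntegral_smul_eq_flip (L := innerₗ _)
      Real.continuous_fourierChar continuous_inner φ.integrable (integrable_gaussian hb)
  simp only [smul_eq_mul, hφψ] at hflip
  rw [hflip, ← integral_const_mul, hψφ]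
  refine norm_integral_le_of_norm_le (φ.integrable.norm.const_mul _) (ae_of_all _ fun ξ => ?_)
  rw [norm_mul, mul_comm]
  exact mul_le_mul_of_nonneg_right (norm_fourier_gaussian_le ht hb hbt ξ) (norm_nonneg _)

/-- The dispersive bound for a diagonal form with signs `s`: the damping `δ|x|²` added to make the
Gaussian integrable is removed by dominated convergence as `δ → 0⁺`. -/
lemma norm_integral_mul_oscillatory_le {ι : Type*} [Fintype ι]
    (ψ : SchwartzMap (EuclideanSpace ℝ ι) ℂ) {s : ι → ℝ} (hs : ∀ i, |s i| = 1) {t : ℝ}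
    (ht : 0 < t) :
    ‖∫ x : EuclideanSpace ℝ ι,
        ψ x * Complex.exp (-(Complex.I * t * ((∑ i, s i * x i ^ 2 : ℝ) : ℂ)))‖
      ≤ √(π / t) ^ Fintype.card ι * ∫ ξ : EuclideanSpace ℝ ι, ‖𝓕⁻ (⇑ψ) ξ‖ := by
  have hlim : Tendsto (fun δ : ℝ => ∫ x : EuclideanSpace ℝ ι,
      ψ x * Complex.exp (-∑ i, ((δ : ℂ) + Complex.I * t * s i) * (x i : ℂ) ^ 2)) (𝓝[>] 0)
      (𝓝 (∫ x : EuclideanSpace ℝ ι,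
        ψ x * Complex.exp (-(Complex.I * t * ((∑ i, s i * x i ^ 2 : ℝ) : ℂ))))) := by
    refine tendsto_integral_filter_of_dominated_convergence (fun x => ‖ψ x‖) ?_ ?_
      ψ.integrable.norm ?_
    · exact Eventually.of_forall fun δ => by fun_prop
    · filter_upwards [self_mem_nhdsWithin] with δ hδ
      refine ae_of_all _ fun x => ?_
      rw [norm_mul, Complex.norm_exp]
      refine mul_le_of_le_one_right (norm_nonneg _) (Real.exp_le_one_iff.2 ?_)
      have : (-∑ i, ((δ : ℂ) + Complex.I * t * s i) * (x i : ℂ) ^ 2).re = -∑ i, δ * x i ^ 2 := by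
        rw [Complex.neg_re, Complex.re_sum]
        congr 1
        refine Finset.sum_congr rfl fun i _ => ?_
        rw [← Complex.ofReal_pow, Complex.re_mul_ofReal]
        simp
      rw [this, neg_nonpos]
      exact Finset.sum_nonneg fun i _ => mul_nonneg (le_of_lt hδ) (sq_nonneg _)
    · refine ae_of_all _ fun x => ?_
      refine Tendsto.mono_left ?_ nhdsWithin_le_nhds
      have hc : Continuous fun δ : ℝ =>
          ψ x * Complex.exp (-∑ i, ((δ : ℂ) + Complex.I * t * s i) * (x i : ℂ) ^ 2) := by fun_prop
      convert hc.tendsto 0 using 3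
      congr 2
      simp [Finset.mul_sum, mul_assoc]
  refine le_of_tendsto hlim.norm ?_
  filter_upwards [self_mem_nhdsWithin] with δ hδ
  refine norm_integral_mul_gaussian_le ψ ht (fun i => by simpa using hδ) fun i => ?_
  calc t = |((δ : ℂ) + Complex.I * t * s i).im| := by simp [abs_mul, hs i, abs_of_pos ht]
    _ ≤ _ := Complex.abs_im_le_norm _

/-- Conversion between Mathlib's inverse Fourier transform, with kernel `e^{2πi⟨x,ξ⟩}`, and the
unitary one: `𝓕⁻ f ξ = (2π)^{d/2} (FinvD d f) (2πξ)`. -/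
lemma integral_norm_fourierInv (d : ℕ) (f : Eu d → ℂ) :
    ∫ ξ : Eu d, ‖𝓕⁻ f ξ‖
      = ((2 * π) ^ ((d : ℝ) / 2) * ((2 * π) ^ d)⁻¹) * ∫ ξ : Eu d, ‖FinvD d f ξ‖ := by
  have h2π : (0 : ℝ) < 2 * π := by positivity
  have hpt : ∀ ξ : Eu d, ‖𝓕⁻ f ξ‖ = (2 * π) ^ ((d : ℝ) / 2) * ‖FinvD d f ((2 * π) • ξ)‖ := by
    intro ξ
    have hi : 𝓕⁻ f ξ = ∫ x : Eu d,
        Complex.exp (Complex.I * ((∑ j, ((2 * π) • ξ) j * x j : ℝ) : ℂ)) * f x := by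
      rw [Real.fourierInv_eq']
      refine integral_congr_ae (ae_of_all _ fun x => ?_)
      simp only [smul_eq_mul, PiLp.inner_apply, RCLike.inner_apply, conj_trivial,
        PiLp.smul_apply]
      rw [mul_comm Complex.I]
      congr 4
      rw [Finset.mul_sum]
      exact Finset.sum_congr rfl fun i _ => by ring
    rw [FinvD, ← hi, norm_mul, Complex.norm_real, Real.norm_of_nonneg (by positivity),
      ← mul_assoc, ← Real.rpow_add h2π, add_neg_cancel, Real.rpow_zero, one_mul]
  simp only [hpt]
  rw [integral_const_mul, Measure.integral_comp_smul volume (fun ξ => ‖FinvD d f ξ‖)]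
  rw [finrank_euclideanSpace_fin, abs_of_pos (by positivity), smul_eq_mul, mul_assoc]

lemma Pq_eq_sum (n : ℕ) (x : Eu (2 * n)) :
    Pq n x = ∑ i : Fin (2 * n), (if (i : ℕ) < n then (1 : ℝ) else -1) * x i ^ 2 := by
  have e : n + n = 2 * n := (two_mul n).symm
  rw [← (finCongr e).sum_comp, Fin.sum_univ_add, Pq, Finset.sum_sub_distrib, sub_eq_add_neg,
    ← Finset.sum_neg_distrib]
  congr 1 <;> refine Finset.sum_congr rfl fun i _ => ?_
  · have : finCongr e (Fin.castAdd n i) = ⟨i.1, by have := i.isLt; omega⟩ := rfl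
    rw [this]
    simp
  · have : finCongr e (Fin.natAdd n i) = ⟨n + i.1, by have := i.isLt; omega⟩ := rfl
    rw [this]
    simp

lemma continuous_Pq (n : ℕ) : Continuous (Pq n) := by
  unfold Pq
  fun_prop

/-! ### The oscillatory integral `t ↦ ∫ f(x) e^{-itP(x)} dx` -/

/-- The oscillatory integral `∫ f(x) e^{-itP(x)} dx`. -/
def oscInt (n : ℕ) (f : Eu (2 * n) → ℂ) (t : ℝ) : ℂ :=
  ∫ x : Eu (2 * n), f x * Complex.exp (-(Complex.I * t * (Pq n x : ℂ)))

lemma norm_mul_oscillatory (n : ℕ) (z : ℂ) (t : ℝ) (x : Eu (2 * n)) :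
    ‖z * Complex.exp (-(Complex.I * t * (Pq n x : ℂ)))‖ = ‖z‖ := by
  simp [Complex.norm_exp]

lemma continuous_oscInt (n : ℕ) (ψ : SchwartzMap (Eu (2 * n)) ℂ) :
    Continuous (oscInt n ψ) := by
  have := continuous_Pq n
  refine continuous_of_dominated (bound := fun x => ‖ψ x‖)
    (fun t => Continuous.aestronglyMeasurable (by fun_prop))
    (fun t => ae_of_all _ fun x => (norm_mul_oscillatory n _ t x).le) ψ.integrable.norm
    (ae_of_all _ fun x => by fun_prop)

lemma norm_oscInt_le (n : ℕ) (ψ : SchwartzMap (Eu (2 * n)) ℂ) (t : ℝ) :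
    ‖oscInt n ψ t‖ ≤ ∫ x, ‖ψ x‖ :=
  norm_integral_le_of_norm_le ψ.integrable.norm
    (ae_of_all _ fun x => (norm_mul_oscillatory n _ t x).le)

lemma pow_mul_norm_oscInt_le (n : ℕ) (ψ : SchwartzMap (Eu (2 * n)) ℂ) {t : ℝ} (ht : 0 < t) :
    t ^ n * ‖oscInt n ψ t‖ ≤ π ^ n * ∫ ξ : Eu (2 * n), ‖𝓕⁻ (⇑ψ) ξ‖ := by
  have h := norm_integral_mul_oscillatory_le ψ
    (s := fun i => if (i : ℕ) < n then (1 : ℝ) else -1) (fun i => by split_ifs <;> simp) ht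
  simp only [← Pq_eq_sum] at h
  rw [Fintype.card_fin, pow_mul, Real.sq_sqrt (by positivity), div_pow] at h
  calc t ^ n * ‖oscInt n ψ t‖ ≤ t ^ n * (π ^ n / t ^ n * ∫ ξ : Eu (2 * n), ‖𝓕⁻ (⇑ψ) ξ‖) :=
        mul_le_mul_of_nonneg_left h (by positivity)
    _ = _ := by field_simp

/-- A majorant, integrable in `t` and independent of `ε`, which combines the trivial bound on
`oscInt` (used for `t ≤ 1`) with its decay of order `t⁻ⁿ` (used for `t ≥ 1`). -/
lemma norm_integrand_le {n : ℕ} (hn : 2 ≤ n) (ψ : SchwartzMap (Eu (2 * n)) ℂ) {ε t : ℝ}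
    (hε : 0 ≤ ε) (ht : 0 < t) :
    ‖(t : ℂ) ^ (n - 2) * Complex.exp (-(ε * t)) * oscInt n ψ t‖
      ≤ 2 * ((∫ x, ‖ψ x‖) + π ^ n * ∫ ξ : Eu (2 * n), ‖𝓕⁻ (⇑ψ) ξ‖) * (1 + t ^ 2)⁻¹ := by
  obtain ⟨k, rfl⟩ := Nat.exists_eq_add_of_le' hn
  have hA : 0 ≤ ∫ x, ‖ψ x‖ := integral_nonneg fun _ => norm_nonneg _
  have hB : 0 ≤ π ^ (k + 2) * ∫ ξ : Eu (2 * (k + 2)), ‖𝓕⁻ (⇑ψ) ξ‖ :=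
    mul_nonneg (by positivity) (integral_nonneg fun _ => norm_nonneg _)
  have h1 := norm_oscInt_le (k + 2) ψ t
  have h2 := pow_mul_norm_oscInt_le (k + 2) ψ ht
  have he : ‖Complex.exp (-(ε * t))‖ ≤ 1 := by
    rw [Complex.norm_exp, Real.exp_le_one_iff]
    simpa using mul_nonneg hε ht.le
  have hG := norm_nonneg (oscInt (k + 2) ψ t)
  generalize (∫ x, ‖ψ x‖) = A at *
  generalize (π ^ (k + 2) * ∫ ξ : Eu (2 * (k + 2)), ‖𝓕⁻ (⇑ψ) ξ‖) = B at *
  rw [norm_mul, norm_mul, norm_pow, Complex.norm_real, Real.norm_of_nonneg ht.le,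
    Nat.add_sub_cancel]
  generalize ‖oscInt (k + 2) ψ t‖ = G at *
  have h3 : t ^ k * ‖Complex.exp (-(ε * t))‖ * G ≤ t ^ k * G := by
    have : t ^ k * ‖Complex.exp (-(ε * t))‖ ≤ t ^ k := mul_le_of_le_one_right (by positivity) he
    exact mul_le_mul_of_nonneg_right this hG
  refine h3.trans ?_
  rw [← div_eq_mul_inv, le_div_iff₀ (by positivity)]
  rcases le_total t 1 with h | h
  · have hk : t ^ k * (1 + t ^ 2) ≤ 1 * 2 :=
      mul_le_mul (pow_le_one₀ ht.le h) (by nlinarith) (by positivity) one_pos.le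
    nlinarith [mul_le_mul_of_nonneg_right hk hG]
  · have hk : t ^ k * (1 + t ^ 2) ≤ 2 * t ^ (k + 2) := by
      rw [pow_add]
      nlinarith [pow_pos ht k, mul_nonneg (pow_pos ht k).le (show 0 ≤ t ^ 2 - 1 by nlinarith)]
    nlinarith [mul_le_mul_of_nonneg_right hk hG]

/-! ### The representation as a Laplace transform -/

/-- The Laplace formula for `z⁻⁽ᵏ⁺¹⁾` at `z = ε + iP(x) = i(P(x) - iε)`, integrated against `ψ`
with Fubini. -/
lemma integral_mul_inv_pow_eq (n k : ℕ) (ψ : SchwartzMap (Eu (2 * n)) ℂ) {ε : ℝ} (hε : 0 < ε) :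
    ∫ x : Eu (2*n), ψ x * ((((Pq n x : ℝ) : ℂ) - ε * Complex.I)^(k+1))⁻¹
      = Complex.I ^ (k + 1) / k.factorial *
        ∫ t in Ioi (0 : ℝ), (t : ℂ) ^ k * Complex.exp (-(ε * t)) * oscInt n ψ t := by
  have hP := continuous_Pq n
  have hpt : ∀ x : Eu (2 * n), ψ x * ((((Pq n x : ℝ) : ℂ) - ε * Complex.I)^(k+1))⁻¹
      = Complex.I ^ (k + 1) / k.factorial * ∫ t in Ioi (0 : ℝ),
        ψ x * ((t : ℂ) ^ k * Complex.exp (-(((ε : ℂ) + Complex.I * Pq n x) * t))) := by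
    intro x
    have hz : 0 < ((ε : ℂ) + Complex.I * Pq n x).re := by simpa using hε
    have hf : (k.factorial : ℂ) ≠ 0 := by exact_mod_cast k.factorial_ne_zero
    have hz' : (ε : ℂ) + Complex.I * Pq n x = Complex.I * (Pq n x - ε * Complex.I) := by
      linear_combination (ε : ℂ) * Complex.I_sq
    have h0 : (Pq n x - ε * Complex.I : ℂ) ≠ 0 := by
      intro h
      rw [hz', h] at hz
      simp at hz
    rw [integral_const_mul, integral_pow_mul_cexp k hz, hz', mul_pow]
    have := pow_ne_zero (k + 1) Complex.I_ne_zero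
    have := pow_ne_zero (k + 1) h0
    field_simp
  simp only [hpt]
  rw [integral_const_mul, integral_integral_swap]
  · congr 1
    refine integral_congr_ae (ae_of_all _ fun t => ?_)
    simp only [oscInt]
    rw [← integral_const_mul]
    refine integral_congr_ae (ae_of_all _ fun x => ?_)
    beta_reduce
    rw [show -(((ε : ℂ) + Complex.I * Pq n x) * t)
      = -(ε * t) + -(Complex.I * t * Pq n x) by ring, Complex.exp_add]
    ring
  · refine Integrable.mono' (ψ.integrable.norm.mul_prod (integrableOn_pow_mul_rexp k hε))
      (Continuous.aestronglyMeasurable (by simp only [Function.uncurry_def]; fun_prop)) ?_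
    have hm : ∀ᵐ p : Eu (2 * n) × ℝ ∂(volume.prod (volume.restrict (Ioi 0))), p.2 ∈ Ioi (0 : ℝ) :=
      Measure.quasiMeasurePreserving_snd.ae (ae_restrict_mem measurableSet_Ioi)
    filter_upwards [hm] with ⟨x, t⟩ ht
    have ht' : 0 < t := ht
    change ‖ψ x * ((t : ℂ) ^ k * Complex.exp (-(((ε : ℂ) + Complex.I * Pq n x) * t)))‖
      ≤ ‖ψ x‖ * (t ^ k * Real.exp (-(ε * t)))
    simp [Complex.norm_exp, abs_of_pos ht']

theorem stmt6 (n : ℕ) (hn : 2 ≤ n) :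
    (∀ ψ : SchwartzMap (Eu (2*n)) ℂ, ∃ L : ℂ,
      Tendsto (fun ε : ℝ =>
          ∫ x : Eu (2*n), ψ x * ((((Pq n x : ℝ) : ℂ) - ε * Complex.I)^(n-1))⁻¹)
        (𝓝[>] (0:ℝ)) (𝓝 L)) ∧
    (∃ C : ℝ, 0 < C ∧ ∀ ψ : SchwartzMap (Eu (2*n)) ℂ, ∀ ε : ℝ, 0 < ε →
      ‖∫ x : Eu (2*n), ψ x * ((((Pq n x : ℝ) : ℂ) - ε * Complex.I)^(n-1))⁻¹‖
        ≤ C * ((∫ x : Eu (2*n), ‖ψ x‖) + ∫ ξ : Eu (2*n), ‖FinvD (2*n) (⇑ψ) ξ‖)) := by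
  have hk : n - 1 = (n - 2) + 1 := by omega
  rw [hk]
  have hI : IntegrableOn (fun t : ℝ => (1 + t ^ 2)⁻¹) (Ioi 0) :=
    integrable_inv_one_add_sq.integrableOn
  refine ⟨fun ψ => ⟨Complex.I ^ (n - 2 + 1) / (n - 2).factorial *
      ∫ t in Ioi (0 : ℝ), (t : ℂ) ^ (n - 2) * Complex.exp (-((0 : ℝ) * t)) * oscInt n ψ t, ?_⟩, ?_⟩
  · have hc := continuous_oscInt n ψ
    refine Tendsto.congr' (f₁ := fun ε : ℝ => Complex.I ^ (n - 2 + 1) / (n - 2).factorial *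
      ∫ t in Ioi (0 : ℝ), (t : ℂ) ^ (n - 2) * Complex.exp (-(ε * t)) * oscInt n ψ t) ?_ ?_
    · filter_upwards [self_mem_nhdsWithin] with ε hε
      exact (integral_mul_inv_pow_eq n (n - 2) ψ hε).symm
    · refine Tendsto.const_mul _ ?_
      refine tendsto_integral_filter_of_dominated_convergence
        (fun t => 2 * ((∫ x, ‖ψ x‖) + π ^ n * ∫ ξ : Eu (2 * n), ‖𝓕⁻ (⇑ψ) ξ‖) * (1 + t ^ 2)⁻¹)
        (Eventually.of_forall fun ε => Continuous.aestronglyMeasurable (by fun_prop)) ?_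
        (hI.const_mul _) ?_
      · filter_upwards [self_mem_nhdsWithin] with ε hε
        filter_upwards [ae_restrict_mem measurableSet_Ioi] with t ht
        exact norm_integrand_le hn ψ (le_of_lt hε) ht
      · refine ae_of_all _ fun t => Tendsto.mono_left ?_ nhdsWithin_le_nhds
        exact Continuous.tendsto (f := fun ε : ℝ =>
          (t : ℂ) ^ (n - 2) * Complex.exp (-(ε * t)) * oscInt n ψ t) (by fun_prop) 0
  -- `D` collects `πⁿ` and the factor relating the `L¹` norms of `𝓕⁻ ψ` and `FinvD (2n) ψ`;
  -- the summand `1` in the constant serves only its positivity.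
  · set D : ℝ := π ^ n * ((2 * π) ^ (((2 * n : ℕ) : ℝ) / 2) * ((2 * π) ^ (2 * n))⁻¹) with hD
    have hD0 : 0 ≤ D := by positivity
    set J : ℝ := ∫ t in Ioi (0 : ℝ), (1 + t ^ 2)⁻¹ with hJ
    have hJ0 : 0 ≤ J := integral_nonneg fun t => by positivity
    refine ⟨2 * (1 + D) * J + 1, by positivity, fun ψ ε hε => ?_⟩
    have hA : 0 ≤ ∫ x, ‖ψ x‖ := integral_nonneg fun _ => norm_nonneg _
    have hB : 0 ≤ ∫ ξ : Eu (2 * n), ‖FinvD (2 * n) ψ ξ‖ := integral_nonneg fun _ => norm_nonneg _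
    have hint : ‖∫ t in Ioi (0 : ℝ), (t : ℂ) ^ (n - 2) * Complex.exp (-(ε * t)) * oscInt n ψ t‖
        ≤ 2 * ((∫ x, ‖ψ x‖) + D * ∫ ξ : Eu (2 * n), ‖FinvD (2 * n) ψ ξ‖) * J := by
      rw [hJ, ← integral_const_mul]
      refine norm_integral_le_of_norm_le (hI.const_mul _) ?_
      filter_upwards [ae_restrict_mem measurableSet_Ioi] with t ht
      have := norm_integrand_le hn ψ hε.le ht
      rwa [integral_norm_fourierInv, ← mul_assoc (π ^ n), ← hD] at this
    rw [integral_mul_inv_pow_eq n (n - 2) ψ hε, norm_mul]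
    have hc : ‖Complex.I ^ (n - 2 + 1) / ((n - 2).factorial : ℂ)‖ ≤ 1 := by
      rw [norm_div, norm_pow, Complex.norm_I, one_pow, Complex.norm_natCast]
      exact div_le_one_of_le₀ (by exact_mod_cast Nat.one_le_iff_ne_zero.2 (Nat.factorial_ne_zero _))
        (Nat.cast_nonneg _)
    refine (mul_le_of_le_one_left (norm_nonneg _) hc).trans (hint.trans ?_)
    generalize (∫ x, ‖ψ x‖) = A at *
    generalize (∫ ξ : Eu (2 * n), ‖FinvD (2 * n) ψ ξ‖) = B at *
    have : 0 ≤ J * (D * A) := by positivity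
    have : 0 ≤ J * B := by positivity
    nlinarith
end
end

section
/- Let n ≥ 1 and c > 0, and define φ(ξ) := exp( −|ξ|²/√c ) for ξ ∈ ℝ^{2n}. Then −P(ξ)·φ(ξ) + (c/4)·(Lφ)(ξ) = 0 for all ξ ∈ ℝ^{2n}. In particular, for every η = (η₊,η₋) ∈ ℝ^r×ℝ^s with |η₊|² − |η₋|² > 0, the operator A_η := −P(ξ)·(·) + ((|η₊|² − |η₋|²)/4)·L is not injective on the Schwartz space 𝓢(ℝ^{2n}), since the nonzero Schwartz function φ with c = |η₊|² − |η₋|² lies in its kernel. -/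
/-!
For `φ(x) = exp(-‖x‖²/b)` and a unit vector `v` one has
`∂_v² φ = ((2/b)² ⟪x, v⟫² - 2/b) φ` (`dir2_gaussian`). In `L = Σ_j ∂_j² - ∂_{n+j}²` the constant
terms cancel in pairs, so that `L φ = (4/b²) P φ` (`Lop_gaussian`). With `b = √c` this is
`(c/4) L φ = P φ`, the asserted identity.

For non-injectivity, `φ` with `c = ⟨η,η⟩_{r,s} > 0` is a Schwartz function (`gaussianSchwartz`):
the derivatives of `-a‖x‖²` grow polynomially, hence by the Faà di Bruno bound
`norm_iteratedFDeriv_comp_le` those of `φ` are at most a power of `1 + ‖x‖` times `φ` itself, and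
`φ` beats every such power (`one_add_pow_mul_exp_le`). Then `φ` and `0` are distinct with the same
image.
-/


open MeasureTheory Filter Matrix Set
open scoped Topology Real

noncomputable section

lemma hasFDerivAt_gaussian {d : ℕ} (b : ℝ) (x : Eu d) :
    HasFDerivAt (fun y : Eu d => Complex.exp (-((‖y‖ ^ 2 / b : ℝ) : ℂ)))
      (Complex.exp (-((‖x‖ ^ 2 / b : ℝ) : ℂ)) •
        (-(Complex.ofRealCLM.comp (b⁻¹ • (2 • innerSL ℝ x))))) x := by
  have h1 : HasFDerivAt (fun y : Eu d => ‖y‖ ^ 2 / b) (b⁻¹ • (2 • innerSL ℝ x)) x := by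
    simpa [div_eq_inv_mul] using (hasStrictFDerivAt_norm_sq x).hasFDerivAt.const_mul b⁻¹
  exact ((Complex.ofRealCLM.hasFDerivAt.comp x h1).neg).cexp

lemma dir2_gaussian {d : ℕ} (b : ℝ) (v x : Eu d) :
    dir2 (fun y : Eu d => Complex.exp (-((‖y‖ ^ 2 / b : ℝ) : ℂ))) v x =
      (((2 / b) ^ 2 * inner ℝ x v ^ 2 - 2 / b * ‖v‖ ^ 2 : ℝ) : ℂ) *
        Complex.exp (-((‖x‖ ^ 2 / b : ℝ) : ℂ)) := by
  have h1 : (fun y : Eu d =>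
      fderiv ℝ (fun y : Eu d => Complex.exp (-((‖y‖ ^ 2 / b : ℝ) : ℂ))) y v) =
      fun y => Complex.exp (-((‖y‖ ^ 2 / b : ℝ) : ℂ)) *
        Complex.ofRealCLM.comp (-(2 / b) • innerSL ℝ v) y := by
    funext y
    rw [(hasFDerivAt_gaussian b y).fderiv]
    simp [real_inner_comm v y]
    ring
  unfold dir2
  have h2 := (hasFDerivAt_gaussian b x).fun_mul
    (Complex.ofRealCLM.comp (-(2 / b) • innerSL ℝ v)).hasFDerivAt
  rw [h1, h2.fderiv]
  simp [real_inner_comm v x]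
  ring

lemma Lop_gaussian (n : ℕ) (b : ℝ) (x : Eu (2*n)) :
    Lop n (fun y : Eu (2*n) => Complex.exp (-((‖y‖ ^ 2 / b : ℝ) : ℂ))) x =
      (((2 / b) ^ 2 * Pq n x : ℝ) : ℂ) * Complex.exp (-((‖x‖ ^ 2 / b : ℝ) : ℂ)) := by
  unfold Lop Pq
  simp only [dir2_gaussian, EuclideanSpace.inner_single_right]
  rw [Finset.mul_sum, Complex.ofReal_sum, Finset.sum_mul]
  refine Finset.sum_congr rfl fun j _ => ?_
  simp
  ring

/-- A Gaussian dominates every power of `1 + r`; the bound is obtained from `t^N / N! ≤ exp t` at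
`t = a (1 + r²)`, together with `(1 + r)² ≤ 2 (1 + r²)`. -/
lemma one_add_pow_mul_exp_le {a : ℝ} (ha : 0 < a) (N : ℕ) {r : ℝ} (hr : 0 ≤ r) :
    (1 + r) ^ N * Real.exp (-(a * r ^ 2)) ≤ N.factorial * (2 / a) ^ N * Real.exp a := by
  have h1 : (1 + r) ^ N ≤ (2 / a) ^ N * (a * (1 + r ^ 2)) ^ N := by
    rw [← mul_pow]
    refine pow_le_pow_left₀ (by positivity) ?_ N
    have : 2 / a * (a * (1 + r ^ 2)) = 2 * (1 + r ^ 2) := by field_simp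
    rw [this]
    nlinarith [sq_nonneg (1 - r)]
  have h2 : (a * (1 + r ^ 2)) ^ N ≤ N.factorial * Real.exp (a * (1 + r ^ 2)) := by
    have := Real.pow_div_factorial_le_exp (a * (1 + r ^ 2)) (by positivity) N
    rwa [div_le_iff₀' (by positivity)] at this
  calc (1 + r) ^ N * Real.exp (-(a * r ^ 2))
      ≤ ((2 / a) ^ N * (N.factorial * Real.exp (a * (1 + r ^ 2)))) *
          Real.exp (-(a * r ^ 2)) := by
        gcongr
        exact h1.trans (by gcongr)
    _ = N.factorial * (2 / a) ^ N *
          (Real.exp (a * (1 + r ^ 2)) * Real.exp (-(a * r ^ 2))) := by ring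
    _ = _ := by rw [← Real.exp_add]; ring_nf

/-- The Gaussian `exp (-a ‖x‖²)` as a real-valued Schwartz function. -/
def gaussianSchwartz (d : ℕ) (a : ℝ) (ha : 0 < a) : SchwartzMap (Eu d) ℝ where
  toFun x := Real.exp (-(a * ‖x‖ ^ 2))
  smooth' := (((contDiff_norm_sq ℝ).const_smul a).neg).exp
  decay' := by
    intro k n
    have hT : Function.HasTemperateGrowth (fun x : Eu d => -(a * ‖x‖ ^ 2)) :=
      ((Function.HasTemperateGrowth.const a).mul
        (Function.hasTemperateGrowth_norm_sq (H := Eu d))).neg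
    obtain ⟨l, C, hC, hb⟩ := hT.norm_iteratedFDeriv_le_uniform n
    refine ⟨n.factorial * (1 + C) ^ n *
      ((k + l * n).factorial * (2 / a) ^ (k + l * n) * Real.exp a), fun x => ?_⟩
    have hx : 1 ≤ 1 + ‖x‖ := by linarith [norm_nonneg x]
    have h1 := norm_iteratedFDeriv_comp_le (𝕜 := ℝ) (g := Real.exp) (n := n)
      (f := fun x : Eu d => -(a * ‖x‖ ^ 2)) (C := Real.exp (-(a * ‖x‖ ^ 2)))
      (D := (1 + C) * (1 + ‖x‖) ^ l) Real.contDiff_exp hT.1 (mod_cast le_top) x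
      (fun i _ => by
        rw [norm_iteratedFDeriv_eq_norm_iteratedDeriv, iteratedDeriv_eq_iterate,
          Real.iter_deriv_exp, Real.norm_of_nonneg (Real.exp_pos _).le])
      (fun i hi hin => by
        have hD : 1 ≤ (1 + C) * (1 + ‖x‖) ^ l :=
          one_le_mul_of_one_le_of_one_le (by linarith) (one_le_pow₀ hx)
        calc _ ≤ C * (1 + ‖x‖) ^ l := hb i hin x
          _ ≤ (1 + C) * (1 + ‖x‖) ^ l := by gcongr; linarith
          _ ≤ _ := le_self_pow₀ hD (by omega))
    calc ‖x‖ ^ k * ‖iteratedFDeriv ℝ n (fun x : Eu d => Real.exp (-(a * ‖x‖ ^ 2))) x‖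
        ≤ (1 + ‖x‖) ^ k * (n.factorial * Real.exp (-(a * ‖x‖ ^ 2)) *
            ((1 + C) * (1 + ‖x‖) ^ l) ^ n) := by
          gcongr
          · linarith
          · exact h1
      _ = n.factorial * (1 + C) ^ n *
            ((1 + ‖x‖) ^ (k + l * n) * Real.exp (-(a * ‖x‖ ^ 2))) := by
          rw [mul_pow, pow_add, pow_mul]; ring
      _ ≤ _ := by
          exact mul_le_mul_of_nonneg_left (one_add_pow_mul_exp_le ha _ (norm_nonneg x))
            (by positivity)

lemma gaussian_mem_kernel (n : ℕ) {c : ℝ} (hc : 0 < c) (ξ : Eu (2*n)) :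
    -((Pq n ξ : ℝ) : ℂ) * Complex.exp (-((‖ξ‖^2 / Real.sqrt c : ℝ) : ℂ))
      + ((c/4 : ℝ) : ℂ)
          * Lop n (fun x : Eu (2*n) => Complex.exp (-((‖x‖^2 / Real.sqrt c : ℝ) : ℂ))) ξ
      = 0 := by
  have h : c / 4 * ((2 / Real.sqrt c) ^ 2 * Pq n ξ) = Pq n ξ := by
    rw [div_pow, Real.sq_sqrt hc.le]
    field_simp
    norm_num
  rw [Lop_gaussian, ← mul_assoc, ← Complex.ofReal_mul, h]
  ring

theorem stmt13 (n : ℕ) (hn : 1 ≤ n) (c : ℝ) (hc : 0 < c) :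
    (∀ ξ : Eu (2*n),
      -((Pq n ξ : ℝ) : ℂ) * Complex.exp (-((‖ξ‖^2 / Real.sqrt c : ℝ) : ℂ))
        + ((c/4 : ℝ) : ℂ)
            * Lop n (fun x : Eu (2*n) => Complex.exp (-((‖x‖^2 / Real.sqrt c : ℝ) : ℂ))) ξ
        = 0) ∧
    ∀ (r s : ℕ) (η : Fin (r+s) → ℝ), 0 < innerSig r η →
      ¬ Function.Injective (fun ψ : SchwartzMap (Eu (2*n)) ℂ =>
          (fun ξ : Eu (2*n) =>
            -((Pq n ξ : ℝ) : ℂ) * ψ ξ + ((innerSig r η / 4 : ℝ) : ℂ) * Lop n (⇑ψ) ξ)) := by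
  refine ⟨gaussian_mem_kernel n hc, fun r s η hη hinj => ?_⟩
  have hb : 0 < (Real.sqrt (innerSig r η))⁻¹ := inv_pos.2 (Real.sqrt_pos.2 hη)
  let ψ : SchwartzMap (Eu (2*n)) ℂ :=
    (gaussianSchwartz (2*n) _ hb).postcompCLM Complex.ofRealCLM
  have hψ : (ψ : Eu (2*n) → ℂ) =
      fun x => Complex.exp (-((‖x‖^2 / Real.sqrt (innerSig r η) : ℝ) : ℂ)) := by
    funext x
    change ((Real.exp (-((Real.sqrt (innerSig r η))⁻¹ * ‖x‖ ^ 2)) : ℝ) : ℂ) = _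
    rw [Complex.ofReal_exp, Complex.ofReal_neg, div_eq_inv_mul]
  have h0 : ψ = 0 := by
    apply hinj
    funext ξ
    have h := gaussian_mem_kernel n hη ξ
    rw [← hψ] at h
    have hψξ := congrFun hψ ξ
    beta_reduce at hψξ
    rw [← hψξ] at h
    refine h.trans ?_
    have hz : ((0 : SchwartzMap (Eu (2*n)) ℂ) : Eu (2*n) → ℂ) = fun _ => 0 := rfl
    simp [Lop, dir2, hz]
  have h1 := congrFun hψ 0
  rw [h0] at h1
  exact Complex.exp_ne_zero _ h1.symm
end
end
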